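/- arXiv:2208.02099 — 7 statements merged into one kernel-verified Lean document; each statement's English description precedes it below -/
import Mathlib

section
/- Let u, v, w ∈ ℝ² be such that v − u and w − u are linearly independent over ℝ. Let ρ₁, ρ₂, ρ₃ be primitive vectors of ℤ² such that v − u = t₁·ρ₁, w − u = t₂·ρ₂ and w − v = t₃·ρ₃ for some real numbers t₁, t₂, t₃ > 0. Assume that (ρ₁, ρ₂) is a ℤ-basis of ℤ². Then both (ρ₁, ρ₃) and (ρ₂, ρ₃) are ℤ-bases of ℤ² if and only if ρ₃ = ρ₂ − ρ₁. -/
namespace Stmt0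

/-- The canonical inclusion of `ℤ × ℤ` into `ℝ × ℝ`. -/
def toR (p : ℤ × ℤ) : ℝ × ℝ := ((p.1 : ℝ), (p.2 : ℝ))

/-- A vector of `ℤ²` is primitive if the gcd of its coordinates is `1`. -/
def Primitive (ρ : ℤ × ℤ) : Prop := Int.gcd ρ.1 ρ.2 = 1

/-- A pair of vectors of `ℤ²` is a `ℤ`-basis of `ℤ²` iff the determinant of the matrix with
these columns is `±1`. -/
def IsZBasis (u v : ℤ × ℤ) : Prop :=
  u.1 * v.2 - u.2 * v.1 = 1 ∨ u.1 * v.2 - u.2 * v.1 = -1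

/-- The determinant of the matrix with columns `u` and `v`. -/
def cross (u v : ℤ × ℤ) : ℤ := u.1 * v.2 - u.2 * v.1

/-- Integers `d, e` with `|d| = |e| = 1` that are positively proportional are equal. -/
theorem eq_of_unit_of_pos_mul_eq {d e : ℤ} {s t : ℝ} (hs : 0 < s) (ht : 0 < t)
    (h : s * (d : ℝ) = t * (e : ℝ)) (hd : d = 1 ∨ d = -1) (he : e = 1 ∨ e = -1) : d = e := by
  rcases hd with rfl | rfl <;> rcases he with rfl | rfl <;> first | rfl | (push_cast at h; linarith)

/-- Cramer's rule: if all three pairwise determinants agree and are nonzero, the third vector is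
the difference of the first two. -/
theorem eq_sub_of_cross_eq {p q r : ℤ × ℤ} (h0 : cross p q ≠ 0)
    (hp : cross p r = cross p q) (hq : cross q r = cross p q) : r = q - p := by
  unfold cross at *
  ext
  · apply mul_left_cancel₀ h0
    simp only [Prod.fst_sub]
    linear_combination q.1 * hp - p.1 * hq
  · apply mul_left_cancel₀ h0
    simp only [Prod.snd_sub]
    linear_combination q.2 * hp - p.2 * hq

theorem delzant_triangle (u v w : ℝ × ℝ)
    (hind : LinearIndependent ℝ ![v - u, w - u])
    (ρ₁ ρ₂ ρ₃ : ℤ × ℤ)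
    (hρ₁ : Primitive ρ₁) (hρ₂ : Primitive ρ₂) (hρ₃ : Primitive ρ₃)
    (t₁ t₂ t₃ : ℝ) (ht₁ : 0 < t₁) (ht₂ : 0 < t₂) (ht₃ : 0 < t₃)
    (h₁ : v - u = t₁ • toR ρ₁) (h₂ : w - u = t₂ • toR ρ₂) (h₃ : w - v = t₃ • toR ρ₃)
    (hbasis : IsZBasis ρ₁ ρ₂) :
    (IsZBasis ρ₁ ρ₃ ∧ IsZBasis ρ₂ ρ₃) ↔ ρ₃ = ρ₂ - ρ₁ := by
  have edge : t₃ • toR ρ₃ = t₂ • toR ρ₂ - t₁ • toR ρ₁ := by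
    rw [← h₁, ← h₂, ← h₃]; abel
  have edge_fst := congrArg Prod.fst edge
  have edge_snd := congrArg Prod.snd edge
  simp only [toR, Prod.smul_mk, Prod.mk_sub_mk, smul_eq_mul] at edge_fst edge_snd
  have cross₁₃ : t₃ * (cross ρ₁ ρ₃ : ℝ) = t₂ * (cross ρ₁ ρ₂ : ℝ) := by
    simp only [cross]
    push_cast
    linear_combination (ρ₁.1 : ℝ) * edge_snd - (ρ₁.2 : ℝ) * edge_fst
  have cross₂₃ : t₃ * (cross ρ₂ ρ₃ : ℝ) = t₁ * (cross ρ₁ ρ₂ : ℝ) := by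
    simp only [cross]
    push_cast
    linear_combination (ρ₂.1 : ℝ) * edge_snd - (ρ₂.2 : ℝ) * edge_fst
  constructor
  · rintro ⟨h₁₃, h₂₃⟩
    refine eq_sub_of_cross_eq ?_ (eq_of_unit_of_pos_mul_eq ht₃ ht₂ cross₁₃ h₁₃ hbasis)
      (eq_of_unit_of_pos_mul_eq ht₃ ht₁ cross₂₃ h₂₃ hbasis)
    rcases hbasis with h | h <;> simp [cross, h]
  · rintro rfl
    have e₁₃ : ρ₁.1 * (ρ₂ - ρ₁).2 - ρ₁.2 * (ρ₂ - ρ₁).1 = ρ₁.1 * ρ₂.2 - ρ₁.2 * ρ₂.1 := by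
      simp only [Prod.fst_sub, Prod.snd_sub]; ring
    have e₂₃ : ρ₂.1 * (ρ₂ - ρ₁).2 - ρ₂.2 * (ρ₂ - ρ₁).1 = ρ₁.1 * ρ₂.2 - ρ₁.2 * ρ₂.1 := by
      simp only [Prod.fst_sub, Prod.snd_sub]; ring
    exact ⟨by rwa [IsZBasis, e₁₃], by rwa [IsZBasis, e₂₃]⟩

end Stmt0
end

section
/- Let P = conv{a,b,c} ⊆ ℝ² be a triangle with affinely independent vertices a, b, c. Say that P satisfies the momentum-polytope conditions if: (i) P ⊆ 𝔱₊; (ii) for any two distinct vertices p, q of P the difference q − p is a positive real multiple of some primitive vector of ℤ² (for a vertex p, denote by ρ₁ᵖ and ρ₂ᵖ the primitive vectors of ℤ² that are positive real multiples of the differences of the two other vertices with p); (iii) for every vertex p with p₁ > p₂, the pair (ρ₁ᵖ, ρ₂ᵖ) is a ℤ-basis of ℤ²; (iv) for every vertex p with p₁ = p₂, the unordered pair {ρ₁ᵖ, ρ₂ᵖ} equals one of the following sets: {(1,1),(k+1,k)} for some k ∈ ℤ; {(−1,−1),(k+1,k)} for some k ∈ ℤ; {(1,−1),(j+1,−j)}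 for some j ∈ ℕ; {(1,−1),(j,−j−1)} for some j ∈ ℕ; {(j+1,−j),(j,−j−1)} for some j ∈ ℕ. Then P satisfies the momentum-polytope conditions if and only if P is one of the following triangles: (1) (s, s−r) + t·conv{(0,0), (b₁,−a₁), (b₂,−a₂)} where r, t ∈ ℝ with r > 0 and t > 0, s ∈ ℝ, and a₁, b₁, a₂, b₂ ∈ ℤ with a₁b₂ − a₂b₁ = 1 and aᵢ + bᵢ ≥ 0 for i ∈ {1,2}; (2) (s,s) + t·conv{(0,0), (ℓ,ℓ), (k+1,k)} where s ∈ ℝ, t > 0, k ∈ ℤ, ℓ ∈ {1,−1}; (3) (s,s) + t·conv{(0,0), (1,−1), (j+1,−j)} where s ∈ ℝ, t > 0, j ∈ ℕ; (4) (s,s) + t·conv{(0,0), (1,−1), (j,−j−1)} where s ∈ ℝ, t > 0, j ∈ ℕ; (5) (s,s) + t·conv{(0,0), (1,0), (0,−1)} where s ∈ ℝ, t > 0. -/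
namespace Stmt1

/-- The canonical inclusion of `ℤ × ℤ` into `ℝ × ℝ`. -/
def toR (p : ℤ × ℤ) : ℝ × ℝ := ((p.1 : ℝ), (p.2 : ℝ))

/-- A vector of `ℤ²` is primitive if the gcd of its coordinates is `1`. -/
def Primitive (ρ : ℤ × ℤ) : Prop := Int.gcd ρ.1 ρ.2 = 1

/-- A pair of vectors of `ℤ²` is a `ℤ`-basis of `ℤ²` iff the determinant of the matrix with
these columns is `±1`. -/
def IsZBasis (u v : ℤ × ℤ) : Prop :=
  u.1 * v.2 - u.2 * v.1 = 1 ∨ u.1 * v.2 - u.2 * v.1 = -1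

/-- `ρ` is the primitive vector of `ℤ²` which is a positive real multiple of `q - p`. -/
def PrimDir (p q : ℝ × ℝ) (ρ : ℤ × ℤ) : Prop :=
  Primitive ρ ∧ ∃ t : ℝ, 0 < t ∧ q - p = t • toR ρ

/-- The unordered pair `{ρ₁, ρ₂}` is one of the admissible pairs at a vertex lying on the
wall of the Weyl chamber (condition (4) of Proposition 3.3 of the paper). -/
def WallSet (ρ₁ ρ₂ : ℤ × ℤ) : Prop :=
  (∃ k : ℤ, ({ρ₁, ρ₂} : Set (ℤ × ℤ)) = {(1, 1), (k + 1, k)}) ∨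
  (∃ k : ℤ, ({ρ₁, ρ₂} : Set (ℤ × ℤ)) = {(-1, -1), (k + 1, k)}) ∨
  (∃ j : ℕ, ({ρ₁, ρ₂} : Set (ℤ × ℤ)) = {(1, -1), ((j : ℤ) + 1, -(j : ℤ))}) ∨
  (∃ j : ℕ, ({ρ₁, ρ₂} : Set (ℤ × ℤ)) = {(1, -1), ((j : ℤ), -(j : ℤ) - 1)}) ∨
  (∃ j : ℕ, ({ρ₁, ρ₂} : Set (ℤ × ℤ)) = {((j : ℤ) + 1, -(j : ℤ)), ((j : ℤ), -(j : ℤ) - 1)})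

/-- The conditions at the vertex `p` of the triangle with vertices `p`, `q`, `r`:
the edge directions at `p` are positive multiples of primitive integral vectors
`ρ₁ᵖ`, `ρ₂ᵖ`, and these form a `ℤ`-basis if `p` lies in the interior of the Weyl chamber,
resp. an admissible wall pair if `p` lies on the wall. -/
def VertexCond (p q r : ℝ × ℝ) : Prop :=
  (∃ ρ, PrimDir p q ρ) ∧ (∃ ρ, PrimDir p r ρ) ∧
  ∀ ρ₁ ρ₂, PrimDir p q ρ₁ → PrimDir p r ρ₂ →
    (p.2 < p.1 → IsZBasis ρ₁ ρ₂) ∧ (p.1 = p.2 → WallSet ρ₁ ρ₂)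

/-- The momentum-polytope conditions for the triangle with vertices `a`, `b`, `c`
(Proposition 3.3 of the paper, specialized to triangles). -/
def MPConds (a b c : ℝ × ℝ) : Prop :=
  convexHull ℝ ({a, b, c} : Set (ℝ × ℝ)) ⊆ {v : ℝ × ℝ | v.2 ≤ v.1} ∧
  VertexCond a b c ∧ VertexCond b a c ∧ VertexCond c a b

/-- The triangles of the classification, as subsets of the plane. -/
def IsListed (P : Set (ℝ × ℝ)) : Prop :=
      (∃ (r s t : ℝ) (a₁ b₁ a₂ b₂ : ℤ), 0 < r ∧ 0 < t ∧
        a₁ * b₂ - a₂ * b₁ = 1 ∧ 0 ≤ a₁ + b₁ ∧ 0 ≤ a₂ + b₂ ∧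
        P =
          (fun v : ℝ × ℝ => ((s, s - r) : ℝ × ℝ) + t • v) ''
            convexHull ℝ ({((0 : ℝ), (0 : ℝ)), ((b₁ : ℝ), -(a₁ : ℝ)),
              ((b₂ : ℝ), -(a₂ : ℝ))} : Set (ℝ × ℝ))) ∨
      (∃ (s t : ℝ) (k ℓ : ℤ), 0 < t ∧ (ℓ = 1 ∨ ℓ = -1) ∧
        P =
          (fun v : ℝ × ℝ => ((s, s) : ℝ × ℝ) + t • v) ''
            convexHull ℝ ({((0 : ℝ), (0 : ℝ)), ((ℓ : ℝ), (ℓ : ℝ)),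
              ((k : ℝ) + 1, (k : ℝ))} : Set (ℝ × ℝ))) ∨
      (∃ (s t : ℝ) (j : ℕ), 0 < t ∧
        P =
          (fun v : ℝ × ℝ => ((s, s) : ℝ × ℝ) + t • v) ''
            convexHull ℝ ({((0 : ℝ), (0 : ℝ)), ((1 : ℝ), (-1 : ℝ)),
              ((j : ℝ) + 1, -(j : ℝ))} : Set (ℝ × ℝ))) ∨
      (∃ (s t : ℝ) (j : ℕ), 0 < t ∧
        P =
          (fun v : ℝ × ℝ => ((s, s) : ℝ × ℝ) + t • v) ''
            convexHull ℝ ({((0 : ℝ), (0 : ℝ)), ((1 : ℝ), (-1 : ℝ)),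
              ((j : ℝ), -(j : ℝ) - 1)} : Set (ℝ × ℝ))) ∨
      (∃ (s t : ℝ), 0 < t ∧
        P =
          (fun v : ℝ × ℝ => ((s, s) : ℝ × ℝ) + t • v) ''
            convexHull ℝ ({((0 : ℝ), (0 : ℝ)), ((1 : ℝ), (0 : ℝ)),
              ((0 : ℝ), (-1 : ℝ))} : Set (ℝ × ℝ)))

section Convexity

variable {E : Type*} [AddCommGroup E] [Module ℝ E]

lemma image_convexHull_triple (x : E) (t : ℝ) (u v w : E) :
    (fun y : E => x + t • y) '' convexHull ℝ {u, v, w} =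
      convexHull ℝ {x + t • u, x + t • v, x + t • w} := by
  have h := (AffineMap.const ℝ E x + t • AffineMap.id ℝ E).image_convexHull {u, v, w}
  simp only [Set.image_insert_eq, Set.image_singleton] at h
  exact h

lemma exists_weights_of_mem_convexHull_triple {a b c x : E} (h : x ∈ convexHull ℝ {a, b, c}) :
    ∃ l m n : ℝ, 0 ≤ l ∧ 0 ≤ m ∧ 0 ≤ n ∧ l + m + n = 1 ∧ l • a + m • b + n • c = x := by
  rw [convexHull_insert (Set.insert_nonempty _ _), convexHull_pair] at h
  simp only [mem_convexJoin, Set.mem_singleton_iff, exists_eq_left] at h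
  obtain ⟨y, ⟨m, n, hm, hn, hmn, rfl⟩, ⟨l, k, hl, hk, hlk, rfl⟩⟩ := h
  refine ⟨l, k * m, k * n, hl, by positivity, by positivity, ?_, ?_⟩
  · linear_combination hlk + k * hmn
  · module

lemma mem_extremePoints_convexHull_triple {a b c : E}
    (h : ∀ x y z : ℝ, x + y + z = 0 → x • a + y • b + z • c = 0 → x = 0 ∧ y = 0 ∧ z = 0) :
    a ∈ (convexHull ℝ {a, b, c}).extremePoints ℝ := by
  refine ⟨subset_convexHull ℝ _ (by simp), ?_⟩
  rintro x hx y hy ⟨s, t, hs, ht, hst, hxy⟩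
  obtain ⟨l, m, n, hl, hm, hn, hlmn, rfl⟩ := exists_weights_of_mem_convexHull_triple hx
  obtain ⟨l', m', n', hl', hm', hn', hlmn', rfl⟩ := exists_weights_of_mem_convexHull_triple hy
  obtain ⟨-, h₁, h₂⟩ := h (s * l + t * l' - 1) (s * m + t * m') (s * n + t * n')
    (by linear_combination s * hlmn + t * hlmn' + hst)
    (by linear_combination (norm := module) hxy)
  have hm0 : m = 0 := by
    have := mul_nonneg hs.le hm
    have := mul_nonneg ht.le hm'
    exact (mul_eq_zero.1 (by linarith : s * m = 0)).resolve_left hs.ne'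
  have hn0 : n = 0 := by
    have := mul_nonneg hs.le hn
    have := mul_nonneg ht.le hn'
    exact (mul_eq_zero.1 (by linarith : s * n = 0)).resolve_left hs.ne'
  subst hm0 hn0
  obtain rfl : l = 1 := by linarith
  simp

lemma weights_eq_zero_of_affineIndependent {a b c : E} (h : AffineIndependent ℝ ![a, b, c])
    (x y z : ℝ) (h₀ : x + y + z = 0) (h₁ : x • a + y • b + z • c = 0) :
    x = 0 ∧ y = 0 ∧ z = 0 := by
  have := (affineIndependent_iff.1 h) Finset.univ ![x, y, z]
    (by simpa [Fin.sum_univ_three] using h₀) (by simpa [Fin.sum_univ_three] using h₁)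
  exact ⟨this 0 (Finset.mem_univ _), this 1 (Finset.mem_univ _), this 2 (Finset.mem_univ _)⟩

/-- A relation on triples that is invariant under permutations only depends on the triangle
spanned by the triple. -/
lemma of_convexHull_triple_eq {a b c p q r : E} (hind : AffineIndependent ℝ ![a, b, c])
    (h : convexHull ℝ {a, b, c} = convexHull ℝ {p, q, r}) {M : E → E → E → Prop}
    (swap : ∀ x y z, M x y z → M y x z) (rot : ∀ x y z, M x y z → M y z x)
    (hM : M p q r) : M a b c := by
  have hw := weights_eq_zero_of_affineIndependent hind
  have key : ∀ x, x ∈ (convexHull ℝ {a, b, c}).extremePoints ℝ → x = p ∨ x = q ∨ x = r := by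
    intro x hx
    rw [h] at hx
    simpa using extremePoints_convexHull_subset hx
  have ha := key a (mem_extremePoints_convexHull_triple hw)
  have hb := key b (by
    rw [Set.insert_comm]
    exact mem_extremePoints_convexHull_triple fun x y z h₀ h₁ => by
      have := hw y x z (by linarith) (by rw [← h₁]; module)
      tauto)
  have hc := key c (by
    rw [show ({a, b, c} : Set E) = {c, a, b} by ext; simp; tauto]
    exact mem_extremePoints_convexHull_triple fun x y z h₀ h₁ => by
      have := hw y z x (by linarith) (by rw [← h₁]; module)
      tauto)
  have hinj := hind.injective
  have hab : a ≠ b := fun e => by simpa using @hinj 0 1 e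
  have hac : a ≠ c := fun e => by simpa using @hinj 0 2 e
  have hbc : b ≠ c := fun e => by simpa using @hinj 1 2 e
  rcases ha with rfl | rfl | rfl <;> rcases hb with rfl | rfl | rfl <;>
    rcases hc with rfl | rfl | rfl <;> first | contradiction | skip
  · exact hM
  · exact swap _ _ _ (rot _ _ _ (rot _ _ _ hM))
  · exact swap _ _ _ hM
  · exact rot _ _ _ hM
  · exact rot _ _ _ (rot _ _ _ hM)
  · exact swap _ _ _ (rot _ _ _ hM)

end Convexity

/-- An ordered version of the admissible pairs of directions at a vertex on the wall. -/
def WallPair (u v : ℤ × ℤ) : Prop :=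
  (∃ k : ℤ, (u = (1, 1) ∨ u = (-1, -1)) ∧ v = (k + 1, k)) ∨
  (∃ j : ℕ, u = (1, -1) ∧ (v = ((j : ℤ) + 1, -(j : ℤ)) ∨ v = ((j : ℤ), -(j : ℤ) - 1))) ∨
  (∃ j : ℕ, u = ((j : ℤ) + 1, -(j : ℤ)) ∧ v = ((j : ℤ), -(j : ℤ) - 1))

lemma wallSet_iff {u v : ℤ × ℤ} : WallSet u v ↔ WallPair u v ∨ WallPair v u := by
  simp only [WallSet, WallPair, Set.pair_eq_pair_iff]
  constructor
  · rintro (⟨k, h⟩ | ⟨k, h⟩ | ⟨k, h⟩ | ⟨k, h⟩ | ⟨k, h⟩) <;> rcases h with ⟨rfl, rfl⟩ | ⟨rfl, rfl⟩ <;>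
      simp
  · rintro ((⟨k, h | h, h'⟩ | ⟨k, h, h' | h'⟩ | ⟨k, h, h'⟩) |
      (⟨k, h | h, h'⟩ | ⟨k, h, h' | h'⟩ | ⟨k, h, h'⟩)) <;> subst h h' <;> simp

lemma WallSet.symm {u v : ℤ × ℤ} (h : WallSet u v) : WallSet v u :=
  wallSet_iff.2 (wallSet_iff.1 h).symm

lemma IsZBasis.symm {u v : ℤ × ℤ} (h : IsZBasis u v) : IsZBasis v u := by
  unfold IsZBasis at *
  rcases h with h | h
  · exact Or.inr (by linarith)
  · exact Or.inl (by linarith)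

lemma IsZBasis.primitive_left {u v : ℤ × ℤ} (h : IsZBasis u v) : Primitive u := by
  refine Int.isCoprime_iff_gcd_eq_one.1 ?_
  rcases h with h | h
  · exact ⟨v.2, -v.1, by linarith⟩
  · exact ⟨-v.2, v.1, by linarith⟩

lemma Primitive.neg {u : ℤ × ℤ} (h : Primitive u) : Primitive (-u) := by
  simpa [Primitive] using h

lemma toR_neg (u : ℤ × ℤ) : toR (-u) = -toR u := by
  simp [toR]

lemma toR_sub (u v : ℤ × ℤ) : toR (u - v) = toR u - toR v := by
  simp [toR]

lemma PrimDir.symm {p q : ℝ × ℝ} {u : ℤ × ℤ} (h : PrimDir p q u) : PrimDir q p (-u) := by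
  obtain ⟨hu, t, ht, e⟩ := h
  refine ⟨hu.neg, t, ht, ?_⟩
  rw [toR_neg, smul_neg, ← e, neg_sub]

lemma primDir_iff {p q : ℝ × ℝ} {u : ℤ × ℤ} : PrimDir p q u ↔ Primitive u ∧
    ∃ t : ℝ, 0 < t ∧ q.1 = p.1 + t * u.1 ∧ q.2 = p.2 + t * u.2 := by
  simp [PrimDir, toR, Prod.ext_iff, sub_eq_iff_eq_add']

lemma eq_of_dvd_of_pos_smul {a b : ℤ} {s t : ℝ} (hs : 0 < s) (ht : 0 < t)
    (h : s * a = t * b) (hab : a ∣ b) (hba : b ∣ a) : a = b := by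
  rcases Int.natAbs_eq_natAbs_iff.1 (Int.natAbs_eq_of_dvd_dvd hab hba) with rfl | rfl
  · rfl
  · push_cast at h
    have : (s + t) * (b : ℝ) = 0 := by linarith
    have hb : (b : ℝ) = 0 := (mul_eq_zero.1 this).resolve_left (by positivity)
    have : b = 0 := by exact_mod_cast hb
    simp [this]

lemma PrimDir.unique {p q : ℝ × ℝ} {u v : ℤ × ℤ} (hu : PrimDir p q u) (hv : PrimDir p q v) :
    u = v := by
  obtain ⟨cu, s, hs, s₁, s₂⟩ := primDir_iff.1 hu
  obtain ⟨cv, t, ht, t₁, t₂⟩ := primDir_iff.1 hv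
  replace cu := Int.isCoprime_iff_gcd_eq_one.2 cu
  replace cv := Int.isCoprime_iff_gcd_eq_one.2 cv
  have e₁ : s * (u.1 : ℝ) = t * v.1 := by linarith
  have e₂ : s * (u.2 : ℝ) = t * v.2 := by linarith
  have e : u.1 * v.2 = u.2 * v.1 := by
    have : s * ((u.1 : ℝ) * v.2) = s * (u.2 * v.1) := by
      linear_combination (v.2 : ℝ) * e₁ - v.1 * e₂
    exact_mod_cast mul_left_cancel₀ hs.ne' this
  ext
  · exact eq_of_dvd_of_pos_smul hs ht e₁ (cu.dvd_of_dvd_mul_left (Dvd.intro _ e))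
      (cv.dvd_of_dvd_mul_right (Dvd.intro_left _ e.symm))
  · exact eq_of_dvd_of_pos_smul hs ht e₂ (cu.symm.dvd_of_dvd_mul_left (Dvd.intro _ e.symm))
      (cv.symm.dvd_of_dvd_mul_right (Dvd.intro_left _ e))

lemma VertexCond.symm {p q r : ℝ × ℝ} (h : VertexCond p q r) : VertexCond p r q :=
  ⟨h.2.1, h.1, fun _ _ h₁ h₂ =>
    ⟨fun hp => ((h.2.2 _ _ h₂ h₁).1 hp).symm, fun hp => ((h.2.2 _ _ h₂ h₁).2 hp).symm⟩⟩

lemma vertexCond_of_primDir {p q r : ℝ × ℝ} {u v : ℤ × ℤ} (hu : PrimDir p q u)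
    (hv : PrimDir p r v) (hz : IsZBasis u v) (hw : p.1 = p.2 → WallSet u v) :
    VertexCond p q r := by
  refine ⟨⟨u, hu⟩, ⟨v, hv⟩, fun u' v' hu' hv' => ?_⟩
  rw [← hu.unique hu', ← hv.unique hv']
  exact ⟨fun _ => hz, hw⟩

lemma MPConds.swap {p q r : ℝ × ℝ} (h : MPConds p q r) : MPConds q p r := by
  obtain ⟨h₀, h₁, h₂, h₃⟩ := h
  exact ⟨by rwa [Set.insert_comm], h₂, h₁, h₃.symm⟩

lemma MPConds.rotate {p q r : ℝ × ℝ} (h : MPConds p q r) : MPConds q r p := by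
  obtain ⟨h₀, h₁, h₂, h₃⟩ := h
  refine ⟨?_, h₂.symm, h₃.symm, h₁⟩
  rwa [Set.pair_comm, Set.insert_comm]

lemma mpConds_of_isZBasis {p : ℝ × ℝ} {t : ℝ} (ht : 0 < t) {u v : ℤ × ℤ} (hz : IsZBasis u v)
    (hp : p.2 ≤ p.1) (hq : (p + t • toR u).2 ≤ (p + t • toR u).1)
    (hr : (p + t • toR v).2 ≤ (p + t • toR v).1) (wp : p.1 = p.2 → WallSet u v)
    (wq : (p + t • toR u).1 = (p + t • toR u).2 → WallSet (-u) (v - u))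
    (wr : (p + t • toR v).1 = (p + t • toR v).2 → WallSet (-v) (u - v)) :
    MPConds p (p + t • toR u) (p + t • toR v) := by
  have zq : IsZBasis (-u) (v - u) := by
    unfold IsZBasis at *
    rcases hz with h | h
    · right; simp; linarith
    · left; simp; linarith
  have zr : IsZBasis (-v) (u - v) := by
    unfold IsZBasis at *
    rcases hz with h | h
    · left; simp; linarith
    · right; simp; linarith
  have du : PrimDir p (p + t • toR u) u := ⟨hz.primitive_left, t, ht, by simp⟩
  have dv : PrimDir p (p + t • toR v) v := ⟨hz.symm.primitive_left, t, ht, by simp⟩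
  have duv : PrimDir (p + t • toR u) (p + t • toR v) (v - u) :=
    ⟨zq.symm.primitive_left, t, ht, by rw [toR_sub]; module⟩
  refine ⟨convexHull_min ?_ ?_, vertexCond_of_primDir du dv hz wp,
    vertexCond_of_primDir du.symm duv zq wq,
    vertexCond_of_primDir dv.symm (neg_sub v u ▸ duv.symm) zr wr⟩
  · rintro x (rfl | rfl | rfl) <;> assumption
  · intro x hx y hy a b ha hb _
    simp only [Set.mem_ofPred_eq, Prod.fst_add, Prod.snd_add, Prod.smul_fst, Prod.smul_snd,
      smul_eq_mul] at *
    gcongr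

lemma convexHull_eq_image (p : ℝ × ℝ) (t : ℝ) (u v : ℤ × ℤ) :
    convexHull ℝ {p, p + t • toR u, p + t • toR v} =
      (fun y : ℝ × ℝ => p + t • y) '' convexHull ℝ {(0, 0), toR u, toR v} := by
  rw [image_convexHull_triple]
  simp [← Prod.zero_eq_mk]

lemma mpConds_of_convexHull_eq_image {a b c p : ℝ × ℝ} (hind : AffineIndependent ℝ ![a, b, c])
    {t : ℝ} (ht : 0 < t) {u v : ℤ × ℤ}
    (h : convexHull ℝ {a, b, c} =
      (fun y : ℝ × ℝ => p + t • y) '' convexHull ℝ {(0, 0), toR u, toR v})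
    (hz : IsZBasis u v)
    (hp : p.2 ≤ p.1) (hq : (p + t • toR u).2 ≤ (p + t • toR u).1)
    (hr : (p + t • toR v).2 ≤ (p + t • toR v).1) (wp : p.1 = p.2 → WallSet u v)
    (wq : (p + t • toR u).1 = (p + t • toR u).2 → WallSet (-u) (v - u))
    (wr : (p + t • toR v).1 = (p + t • toR v).2 → WallSet (-v) (u - v)) :
    MPConds a b c :=
  of_convexHull_triple_eq hind (h.trans (convexHull_eq_image p t u v).symm)
    (fun _ _ _ => MPConds.swap) (fun _ _ _ => MPConds.rotate)
    (mpConds_of_isZBasis ht hz hp hq hr wp wq wr)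

lemma mpConds_of_isListed {a b c : ℝ × ℝ} (hind : AffineIndependent ℝ ![a, b, c])
    (h : IsListed (convexHull ℝ {a, b, c})) : MPConds a b c := by
  rcases h with ⟨r, s, t, a₁, b₁, a₂, b₂, hr, ht, hd, h₁, h₂, h⟩ | ⟨s, t, k, l, ht, hl, h⟩ |
    ⟨s, t, j, ht, h⟩ | ⟨s, t, j, ht, h⟩ | ⟨s, t, ht, h⟩
  · have h₁ : 0 ≤ t * ((a₁ : ℝ) + b₁) := mul_nonneg ht.le (by exact_mod_cast h₁)
    have h₂ : 0 ≤ t * ((a₂ : ℝ) + b₂) := mul_nonneg ht.le (by exact_mod_cast h₂)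
    refine mpConds_of_convexHull_eq_image hind ht (u := (b₁, -a₁)) (v := (b₂, -a₂))
      (by simpa [toR] using h) (Or.inl ?_) ?_ ?_ ?_ ?_ ?_ ?_
    · simp; linarith
    · simp; linarith
    · simp [toR]; linarith
    · simp [toR]; linarith
    · intro e; simp at e; linarith
    · intro e; simp [toR] at e; linarith
    · intro e; simp [toR] at e; linarith
  · refine mpConds_of_convexHull_eq_image hind ht (u := (l, l)) (v := (k + 1, k))
      (by simpa [toR] using h) ?_ ?_ ?_ ?_ ?_ ?_ ?_
    · rcases hl with rfl | rfl
      · right; simp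
      · left; simp
    · simp
    · simp [toR]
    · simp [toR]; linarith
    · intro
      rcases hl with rfl | rfl <;> exact wallSet_iff.2 (Or.inl (Or.inl ⟨k, by simp⟩))
    · intro
      refine wallSet_iff.2 (Or.inl (Or.inl ⟨k - l, ?_⟩))
      rcases hl with rfl | rfl <;> simp
    · intro e; simp [toR] at e; linarith
  · refine mpConds_of_convexHull_eq_image hind ht (u := (1, -1)) (v := (j + 1, -j))
      (by simpa [toR] using h) ?_ ?_ ?_ ?_ ?_ ?_ ?_
    · left; simp
    · simp
    · simp [toR]; linarith
    · simp [toR]; nlinarith [(j.cast_nonneg : (0 : ℝ) ≤ j)]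
    · intro
      exact wallSet_iff.2 (Or.inl (Or.inr (Or.inl ⟨j, by simp⟩)))
    · intro e; simp [toR] at e; linarith
    · intro e; simp [toR] at e; nlinarith [(j.cast_nonneg : (0 : ℝ) ≤ j)]
  · refine mpConds_of_convexHull_eq_image hind ht (u := (1, -1)) (v := (j, -j - 1))
      (by simpa [toR] using h) ?_ ?_ ?_ ?_ ?_ ?_ ?_
    · right; simp; ring
    · simp
    · simp [toR]; linarith
    · simp [toR]; nlinarith [(j.cast_nonneg : (0 : ℝ) ≤ j)]
    · intro
      exact wallSet_iff.2 (Or.inl (Or.inr (Or.inl ⟨j, by simp⟩)))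
    · intro e; simp [toR] at e; linarith
    · intro e
      simp [toR, ht.ne'] at e
      linarith [(j.cast_nonneg : (0 : ℝ) ≤ j)]
  · refine mpConds_of_convexHull_eq_image hind ht (u := (1, 0)) (v := (0, -1))
      (by simpa [toR] using h) ?_ ?_ ?_ ?_ ?_ ?_ ?_
    · right; simp
    · simp
    · simp [toR]; linarith
    · simp [toR]; linarith
    · intro
      exact wallSet_iff.2 (Or.inl (Or.inr (Or.inr ⟨0, by simp⟩)))
    · intro e; simp [toR] at e; linarith
    · intro e; simp [toR] at e; linarith

/-- If the edge directions at two vertices of a triangle form bases of the lattice, then the two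
edges at the third vertex have the same lattice length. -/
lemma exists_common_scale {p q r : ℝ × ℝ} {u v w : ℤ × ℤ} (hu : PrimDir p q u)
    (hv : PrimDir p r v) (hw : PrimDir q r w) (zq : IsZBasis (-u) w) (zr : IsZBasis (-v) (-w)) :
    ∃ t : ℝ, 0 < t ∧ q = p + t • toR u ∧ r = p + t • toR v ∧
      v.1 - u.1 = |u.1 * v.2 - u.2 * v.1| * w.1 := by
  obtain ⟨-, t₁, ht₁, a₁, a₂⟩ := primDir_iff.1 hu
  obtain ⟨-, t₂, ht₂, b₁, b₂⟩ := primDir_iff.1 hv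
  obtain ⟨-, t₃, ht₃, c₁, c₂⟩ := primDir_iff.1 hw
  set D : ℤ := u.1 * v.2 - u.2 * v.1 with hD
  have hq : |((u.1 * w.2 - u.2 * w.1 : ℤ) : ℝ)| = 1 := by
    have : |u.1 * w.2 - u.2 * w.1| = 1 := by
      rw [abs_eq zero_le_one]
      simp only [IsZBasis, Prod.fst_neg, Prod.snd_neg] at zq
      rcases zq with h | h
      · right; linarith
      · left; linarith
    exact_mod_cast this
  have hr : |((v.1 * w.2 - v.2 * w.1 : ℤ) : ℝ)| = 1 := by
    have : |v.1 * w.2 - v.2 * w.1| = 1 := by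
      rw [abs_eq zero_le_one]
      simpa [IsZBasis] using zr
    exact_mod_cast this
  have e₂ : t₂ * |(D : ℝ)| = t₃ := by
    rw [← mul_one t₃, ← hq, ← abs_of_pos ht₂, ← abs_mul, ← abs_of_pos ht₃, ← abs_mul]
    congr 1
    rw [hD]
    push_cast
    linear_combination (u.1 : ℝ) * (c₂ + a₂ - b₂) - u.2 * (c₁ + a₁ - b₁)
  have e₁ : t₁ * |(D : ℝ)| = t₃ := by
    rw [← mul_one t₃, ← hr, ← abs_of_pos ht₁, ← abs_mul, ← abs_of_pos ht₃, ← abs_mul]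
    congr 1
    rw [hD]
    push_cast
    linear_combination (v.1 : ℝ) * (c₂ + a₂ - b₂) - v.2 * (c₁ + a₁ - b₁)
  have hD0 : |(D : ℝ)| ≠ 0 := by
    intro h
    rw [h, mul_zero] at e₁
    exact ht₃.ne e₁
  obtain rfl : t₁ = t₂ := mul_right_cancel₀ hD0 (e₁.trans e₂.symm)
  refine ⟨t₁, ht₁, ?_, ?_, ?_⟩
  · ext <;> simp [toR, *]
  · ext <;> simp [toR, b₁, b₂]
  · have : t₁ * ((v.1 : ℝ) - u.1) = t₁ * (|(D : ℝ)| * w.1) := by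
      linear_combination c₁ + a₁ - b₁ - e₁ * w.1
    exact_mod_cast mul_left_cancel₀ ht₁.ne' this

lemma isListed_of_wallPair {p q r : ℝ × ℝ} {u v : ℤ × ℤ} (h : MPConds p q r) (hp : p.1 = p.2)
    (hu : PrimDir p q u) (hv : PrimDir p r v) (huv : WallPair u v) :
    IsListed (convexHull ℝ {p, q, r}) := by
  obtain ⟨-, -, ⟨-, ⟨w, hw⟩, hq⟩, ⟨-, -, hr⟩⟩ := h
  replace hq := hq _ _ hu.symm hw
  replace hr := hr _ _ hv.symm hw.symm
  obtain ⟨-, t₁, ht₁, a₁, a₂⟩ := primDir_iff.1 hu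
  obtain ⟨-, t₂, ht₂, b₁, b₂⟩ := primDir_iff.1 hv
  obtain ⟨s, s'⟩ := p
  obtain rfl : s = s' := hp
  rcases huv with ⟨k, hu', rfl⟩ | ⟨j, rfl, hv'⟩ | ⟨j, rfl, rfl⟩
  · obtain ⟨l, hl, rfl⟩ : ∃ l : ℤ, (l = 1 ∨ l = -1) ∧ u = (l, l) := by
      rcases hu' with rfl | rfl <;> simp
    obtain ⟨-, t₃, ht₃, c₁, c₂⟩ := primDir_iff.1 hw
    have zr := hr.1 (by rw [b₁, b₂]; push_cast; linarith)
    have hwall := wallSet_iff.1 (hq.2 (by rw [a₁, a₂]))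
    obtain ⟨m, rfl⟩ : ∃ m : ℤ, w = (m + 1, m) := by
      obtain ⟨w₁, w₂⟩ := w
      simp only [WallPair, Prod.mk.injEq, Prod.neg_mk] at hwall
      refine ⟨w₂, ?_⟩
      simp only [Prod.mk.injEq, and_true]
      grind
    push_cast at a₁ a₂ b₁ b₂ c₁ c₂
    obtain rfl : t₂ = t₃ := by linarith
    have hl' : t₁ * (l : ℝ) = t₂ * (k - m) := by linarith
    have hkm : k - m = 1 ∨ k - m = -1 := by
      simp only [IsZBasis, Prod.fst_neg, Prod.snd_neg] at zr
      grind
    obtain rfl : t₁ = t₂ := by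
      have h₁ : |(l : ℝ)| = 1 := by rcases hl with rfl | rfl <;> simp
      have h₂ : |(k : ℝ) - m| = 1 := by
        rw [abs_eq zero_le_one]; exact_mod_cast hkm
      have := congrArg abs hl'
      rwa [abs_mul, abs_mul, h₁, h₂, mul_one, mul_one, abs_of_pos ht₁, abs_of_pos ht₂] at this
    refine Or.inr (Or.inl ⟨s, t₁, k, l, ht₁, hl, ?_⟩)
    rw [image_convexHull_triple]
    have e₁ : ((s, s) : ℝ × ℝ) + t₁ • ((l : ℝ), (l : ℝ)) = q := by ext <;> simp [a₁, a₂]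
    have e₂ : ((s, s) : ℝ × ℝ) + t₁ • ((k : ℝ) + 1, (k : ℝ)) = r := by ext <;> simp [b₁, b₂]
    rw [e₁, e₂, ← Prod.zero_eq_mk, smul_zero, add_zero]
  · have zq := hq.1 (by rw [a₁, a₂]; push_cast; linarith)
    have hj : (0 : ℝ) ≤ t₂ * j := by positivity
    have zr := hr.1 (by
      rw [b₁, b₂]; rcases hv' with rfl | rfl <;> push_cast <;> linarith)
    obtain ⟨t, ht, rfl, rfl, -⟩ := exists_common_scale hu hv hw zq zr
    rw [convexHull_eq_image]
    rcases hv' with rfl | rfl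
    · exact Or.inr (Or.inr (Or.inl ⟨s, t, j, ht, by simp [toR]⟩))
    · exact Or.inr (Or.inr (Or.inr (Or.inl ⟨s, t, j, ht, by simp [toR]⟩)))
  · have hj₁ : (0 : ℝ) ≤ t₁ * j := by positivity
    have hj₂ : (0 : ℝ) ≤ t₂ * j := by positivity
    have zq := hq.1 (by rw [a₁, a₂]; push_cast; linarith)
    have zr := hr.1 (by rw [b₁, b₂]; push_cast; linarith)
    obtain ⟨t, ht, rfl, rfl, e⟩ := exists_common_scale hu hv hw zq zr
    obtain rfl : j = 0 := by
      have hd : 2 * (j : ℤ) + 1 ∣ 1 := by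
        have : |((j : ℤ) + 1) * (-(j : ℤ) - 1) - -(j : ℤ) * j| = 2 * j + 1 := by
          rw [abs_of_nonpos] <;> nlinarith
        simp only [this] at e
        exact ⟨-w.1, by linarith⟩
      have := Int.le_of_dvd one_pos hd
      omega
    rw [convexHull_eq_image]
    exact Or.inr (Or.inr (Or.inr (Or.inr ⟨s, t, ht, by simp [toR]⟩)))

lemma isListed_of_lowest {p q r : ℝ × ℝ} (h : MPConds p q r) (hq : p.1 - p.2 ≤ q.1 - q.2)
    (hr : p.1 - p.2 ≤ r.1 - r.2) : IsListed (convexHull ℝ {p, q, r}) := by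
  obtain ⟨h₀, ⟨⟨u, hu⟩, ⟨v, hv⟩, hp⟩, ⟨-, ⟨w, hw⟩, hq'⟩, ⟨-, -, hr'⟩⟩ := id h
  replace hp := hp _ _ hu hv
  replace hq' := hq' _ _ hu.symm hw
  replace hr' := hr' _ _ hv.symm hw.symm
  have hp0 : p.2 ≤ p.1 := h₀ (subset_convexHull ℝ _ (by simp))
  rcases hp0.lt_or_eq with hlt | heq
  · obtain ⟨t, ht, rfl, rfl, -⟩ := exists_common_scale hu hv hw
      (hq'.1 (by linarith)) (hr'.1 (by linarith))
    obtain ⟨u₁, u₂⟩ := u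
    obtain ⟨v₁, v₂⟩ := v
    have hu0 : 0 ≤ u₁ - u₂ := by
      have : 0 ≤ t * ((u₁ : ℝ) - u₂) := by simp [toR] at hq; linarith
      exact_mod_cast nonneg_of_mul_nonneg_right this ht
    have hv0 : 0 ≤ v₁ - v₂ := by
      have : 0 ≤ t * ((v₁ : ℝ) - v₂) := by simp [toR] at hr; linarith
      exact_mod_cast nonneg_of_mul_nonneg_right this ht
    left
    rcases hp.1 hlt with hd | hd
    · refine ⟨p.1 - p.2, p.1, t, -u₂, u₁, -v₂, v₁, by linarith, ht, ?_, by linarith,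
        by linarith, ?_⟩
      · simp at hd; linarith
      · rw [convexHull_eq_image]; simp [toR]
    · refine ⟨p.1 - p.2, p.1, t, -v₂, v₁, -u₂, u₁, by linarith, ht, ?_, by linarith,
        by linarith, ?_⟩
      · simp at hd; linarith
      · rw [Set.pair_comm, convexHull_eq_image]; simp [toR]
  · rcases wallSet_iff.1 (hp.2 heq.symm) with hw | hw
    · exact isListed_of_wallPair h heq.symm hu hv hw
    · rw [Set.pair_comm]
      exact isListed_of_wallPair h.swap.rotate heq.symm hv hu hw

lemma isListed_of_mpConds {a b c : ℝ × ℝ} (h : MPConds a b c) :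
    IsListed (convexHull ℝ {a, b, c}) := by
  have hb : ({a, b, c} : Set (ℝ × ℝ)) = {b, c, a} := by
    rw [Set.insert_comm, Set.pair_comm]
  have hc : ({a, b, c} : Set (ℝ × ℝ)) = {c, a, b} := by
    rw [Set.pair_comm, Set.insert_comm]
  rcases le_total (a.1 - a.2) (b.1 - b.2) with h₁ | h₁ <;>
    rcases le_total (b.1 - b.2) (c.1 - c.2) with h₂ | h₂ <;>
      rcases le_total (a.1 - a.2) (c.1 - c.2) with h₃ | h₃
  all_goals first
    | exact isListed_of_lowest h (by linarith) (by linarith)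
    | exact hb ▸ isListed_of_lowest h.rotate (by linarith) (by linarith)
    | exact hc ▸ isListed_of_lowest h.rotate.rotate (by linarith) (by linarith)

theorem triangles_classification (a b c : ℝ × ℝ)
    (hind : AffineIndependent ℝ ![a, b, c]) :
    MPConds a b c ↔
      ((∃ (r s t : ℝ) (a₁ b₁ a₂ b₂ : ℤ), 0 < r ∧ 0 < t ∧
        a₁ * b₂ - a₂ * b₁ = 1 ∧ 0 ≤ a₁ + b₁ ∧ 0 ≤ a₂ + b₂ ∧
        convexHull ℝ ({a, b, c} : Set (ℝ × ℝ)) =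
          (fun v : ℝ × ℝ => ((s, s - r) : ℝ × ℝ) + t • v) ''
            convexHull ℝ ({((0 : ℝ), (0 : ℝ)), ((b₁ : ℝ), -(a₁ : ℝ)),
              ((b₂ : ℝ), -(a₂ : ℝ))} : Set (ℝ × ℝ))) ∨
      (∃ (s t : ℝ) (k ℓ : ℤ), 0 < t ∧ (ℓ = 1 ∨ ℓ = -1) ∧
        convexHull ℝ ({a, b, c} : Set (ℝ × ℝ)) =
          (fun v : ℝ × ℝ => ((s, s) : ℝ × ℝ) + t • v) ''
            convexHull ℝ ({((0 : ℝ), (0 : ℝ)), ((ℓ : ℝ), (ℓ : ℝ)),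
              ((k : ℝ) + 1, (k : ℝ))} : Set (ℝ × ℝ))) ∨
      (∃ (s t : ℝ) (j : ℕ), 0 < t ∧
        convexHull ℝ ({a, b, c} : Set (ℝ × ℝ)) =
          (fun v : ℝ × ℝ => ((s, s) : ℝ × ℝ) + t • v) ''
            convexHull ℝ ({((0 : ℝ), (0 : ℝ)), ((1 : ℝ), (-1 : ℝ)),
              ((j : ℝ) + 1, -(j : ℝ))} : Set (ℝ × ℝ))) ∨
      (∃ (s t : ℝ) (j : ℕ), 0 < t ∧
        convexHull ℝ ({a, b, c} : Set (ℝ × ℝ)) =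
          (fun v : ℝ × ℝ => ((s, s) : ℝ × ℝ) + t • v) ''
            convexHull ℝ ({((0 : ℝ), (0 : ℝ)), ((1 : ℝ), (-1 : ℝ)),
              ((j : ℝ), -(j : ℝ) - 1)} : Set (ℝ × ℝ))) ∨
      (∃ (s t : ℝ), 0 < t ∧
        convexHull ℝ ({a, b, c} : Set (ℝ × ℝ)) =
          (fun v : ℝ × ℝ => ((s, s) : ℝ × ℝ) + t • v) ''
            convexHull ℝ ({((0 : ℝ), (0 : ℝ)), ((1 : ℝ), (0 : ℝ)),
              ((0 : ℝ), (-1 : ℝ))} : Set (ℝ × ℝ)))) := by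
  change MPConds a b c ↔ IsListed (convexHull ℝ {a, b, c})
  exact ⟨isListed_of_mpConds, mpConds_of_isListed hind⟩

end Stmt1
end

section
/- Let j ∈ ℕ and let a, b, c ∈ ℝ² satisfy b − a = t₁·(j+1,−j) and c − a = t₂·(j,−j−1) for some real numbers t₁, t₂ > 0. Suppose ρ ∈ ℤ² is primitive with c − b = t₃·ρ for some real t₃ > 0, and suppose that both (ρ, (j+1,−j)) and (ρ, (j,−j−1)) are ℤ-bases of ℤ². Then ρ = (−1,−1) and j = 0. -/
namespace Stmt2

/-- The canonical inclusion of `ℤ × ℤ` into `ℝ × ℝ`. -/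
def toR (p : ℤ × ℤ) : ℝ × ℝ := ((p.1 : ℝ), (p.2 : ℝ))

/-- A vector of `ℤ²` is primitive if the gcd of its coordinates is `1`. -/
def Primitive (ρ : ℤ × ℤ) : Prop := Int.gcd ρ.1 ρ.2 = 1

/-- A pair of vectors of `ℤ²` is a `ℤ`-basis of `ℤ²` iff the determinant of the matrix with
these columns is `±1`. -/
def IsZBasis (u v : ℤ × ℤ) : Prop :=
  u.1 * v.2 - u.2 * v.1 = 1 ∨ u.1 * v.2 - u.2 * v.1 = -1

theorem wall_vertex_forces_j_zero (j : ℕ) (a b c : ℝ × ℝ) (ρ : ℤ × ℤ)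
    (t₁ t₂ t₃ : ℝ) (ht₁ : 0 < t₁) (ht₂ : 0 < t₂) (ht₃ : 0 < t₃)
    (hb : b - a = t₁ • toR ((j : ℤ) + 1, -(j : ℤ)))
    (hc : c - a = t₂ • toR ((j : ℤ), -(j : ℤ) - 1))
    (hρ : Primitive ρ)
    (hcb : c - b = t₃ • toR ρ)
    (h₁ : IsZBasis ρ ((j : ℤ) + 1, -(j : ℤ)))
    (h₂ : IsZBasis ρ ((j : ℤ), -(j : ℤ) - 1)) :
    ρ = (-1, -1) ∧ j = 0 := by
  have hx := congrArg Prod.fst hcb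
  have hy := congrArg Prod.snd hcb
  have hbx := congrArg Prod.fst hb
  have hby := congrArg Prod.snd hb
  have hcx := congrArg Prod.fst hc
  have hcy := congrArg Prod.snd hc
  obtain ⟨x, y⟩ := ρ
  simp only [toR, Prod.fst_sub, Prod.snd_sub, Prod.smul_fst, Prod.smul_snd, smul_eq_mul]
    at hx hy hbx hby hcx hcy
  push_cast at hbx hby hcx hcy
  simp only [IsZBasis] at h₁ h₂
  have hx' : t₃ * x = t₂ * j - t₁ * (j + 1) := by linarith
  have hy' : t₃ * y = t₂ * (-j - 1) - t₁ * (-j) := by linarith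
  -- Pairing the closing edge with either wall edge gives a positive determinant.
  have hpos₁ : 0 < x * -(j : ℤ) - y * ((j : ℤ) + 1) := by
    have hdet : t₃ * (x * -(j : ℝ) - y * ((j : ℝ) + 1)) = t₂ * (2 * j + 1) := by
      linear_combination -(j : ℝ) * hx' - ((j : ℝ) + 1) * hy'
    have hreal : 0 < x * -(j : ℝ) - y * ((j : ℝ) + 1) :=
      pos_of_mul_pos_right (hdet ▸ by positivity) ht₃.le
    exact_mod_cast hreal
  have hpos₂ : 0 < x * (-(j : ℤ) - 1) - y * (j : ℤ) := by
    have hdet : t₃ * (x * (-(j : ℝ) - 1) - y * (j : ℝ)) = t₁ * (2 * j + 1) := by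
      linear_combination (-(j : ℝ) - 1) * hx' - (j : ℝ) * hy'
    have hreal : 0 < x * (-(j : ℝ) - 1) - y * (j : ℝ) :=
      pos_of_mul_pos_right (hdet ▸ by positivity) ht₃.le
    exact_mod_cast hreal
  have hdet₁ : x * -(j : ℤ) - y * ((j : ℤ) + 1) = 1 := by omega
  have hdet₂ : x * (-(j : ℤ) - 1) - y * (j : ℤ) = 1 := by omega
  obtain rfl : x = y := by linarith
  have hprod : (2 * (j : ℤ) + 1) * -x = 1 := by linarith
  have hj : 2 * (j : ℤ) + 1 = 1 :=
    Int.eq_one_of_mul_eq_one_right (by positivity) hprod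
  rw [hj] at hprod
  have hx_eq : x = -1 := by linarith
  exact ⟨by rw [hx_eq], by omega⟩

end Stmt2
end

section
/- Let j ∈ ℕ. Then ((0,−2) − {p·(1,−1) + q·(−j,j−1) : p, q ∈ ℝ, p ≥ 0, q ≥ 0}) ∩ ((j,−j−1) − {p·(j+1,−j) + q·(j,−j+1) : p, q ∈ ℝ, p ≥ 0, q ≥ 0}) = conv{(−1,−1), (0,−2), (j,−j−1)}, where conv denotes the convex hull in ℝ². -/
namespace Stmt7

/-- The convex hull of three points is the set of their convex combinations. -/
theorem mem_convexHull_triple {E : Type*} [AddCommGroup E] [Module ℝ E] {a b c w : E} :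
    w ∈ convexHull ℝ ({a, b, c} : Set E) ↔
      ∃ r s t : ℝ, 0 ≤ r ∧ 0 ≤ s ∧ 0 ≤ t ∧ r + s + t = 1 ∧ r • a + s • b + t • c = w := by
  constructor
  · intro h
    rw [convexHull_insert (Set.insert_nonempty _ _), convexHull_pair] at h
    simp only [convexJoin_singleton_left, Set.mem_iUnion] at h
    obtain ⟨_, ⟨s, t, hs, ht, hst, rfl⟩, u, v, hu, hv, huv, rfl⟩ := h
    refine ⟨u, v * s, v * t, hu, mul_nonneg hv hs, mul_nonneg hv ht, ?_, ?_⟩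
    · rw [add_assoc, ← mul_add, hst, mul_one, huv]
    · rw [smul_add, smul_smul, smul_smul, add_assoc]
  · rintro ⟨r, s, t, hr, hs, ht, hrst, rfl⟩
    have h := (convex_convexHull ℝ ({a, b, c} : Set E)).sum_mem (t := Finset.univ)
      (w := ![r, s, t]) (z := ![a, b, c])
      (by simp [Fin.forall_fin_succ, hr, hs, ht])
      (by simp [Fin.sum_univ_three, hrst])
      (fun i _ => subset_convexHull ℝ _ (by fin_cases i <;> simp))
    simpa [Fin.sum_univ_three] using h

theorem cones_inter_eq_triangle (j : ℕ) :
    {w : ℝ × ℝ | ∃ p q : ℝ, 0 ≤ p ∧ 0 ≤ q ∧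
        w = (((0 : ℝ), (-2 : ℝ)) : ℝ × ℝ)
              - p • (((1 : ℝ), (-1 : ℝ)) : ℝ × ℝ)
              - q • ((-(j : ℝ), (j : ℝ) - 1) : ℝ × ℝ)} ∩
      {w : ℝ × ℝ | ∃ p q : ℝ, 0 ≤ p ∧ 0 ≤ q ∧
        w = (((j : ℝ), -(j : ℝ) - 1) : ℝ × ℝ)
              - p • (((j : ℝ) + 1, -(j : ℝ)) : ℝ × ℝ)
              - q • (((j : ℝ), -(j : ℝ) + 1) : ℝ × ℝ)} =
      convexHull ℝ ({((-1 : ℝ), (-1 : ℝ)), ((0 : ℝ), (-2 : ℝ)),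
        ((j : ℝ), -(j : ℝ) - 1)} : Set (ℝ × ℝ)) := by
  ext ⟨x, y⟩
  simp only [mem_convexHull_triple, Set.mem_inter_iff, Set.mem_ofPred_eq, Prod.smul_mk,
    Prod.mk_sub_mk, Prod.mk_add_mk, Prod.mk.injEq, smul_eq_mul]
  constructor
  · rintro ⟨⟨p, q, hp, hq, hx, hy⟩, p', q', hp', hq', hx', hy'⟩
    have hq_eq : q = 1 - p' - q' := by linear_combination hx' + hy' - hx - hy
    refine ⟨p', q', q, hp', hq', hq, by linarith, ?_, ?_⟩
    · rw [hx', hq_eq]; ring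
    · rw [hy', hq_eq]; ring
  · rintro ⟨r, s, t, hr, hs, ht, hrst, hx, hy⟩
    obtain rfl : s = 1 - r - t := by linarith
    exact ⟨⟨r, t, hr, ht, by linarith, by linarith⟩, r, 1 - r - t, hr, hs, by linarith, by linarith⟩

end Stmt7
end

section
/- Let R = ℤ[x,y] be the polynomial ring over ℤ in two variables, A = R/(x², y³) and B = R/(x², y³ + x·y²), and write x̄ and ȳ for the images of x and y in the respective quotient. There is no ring isomorphism φ : A → B such that the ℤ-submodule of B generated by {φ(x̄), φ(ȳ)} equals the ℤ-submodule of B generated by {x̄, ȳ}. -/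
namespace Stmt11

open MvPolynomial

/-- `ℤ[x,y]`. -/
abbrev R : Type := MvPolynomial (Fin 2) ℤ

/-- The ideal `(x², y³)` of `ℤ[x,y]`. -/
noncomputable def IA : Ideal R := Ideal.span {(X 0 : R) ^ 2, (X 1 : R) ^ 3}

/-- The ideal `(x², y³ + x·y²)` of `ℤ[x,y]`. -/
noncomputable def IB : Ideal R := Ideal.span {(X 0 : R) ^ 2, (X 1 : R) ^ 3 + X 0 * (X 1 : R) ^ 2}

/-- `A = ℤ[x,y]/(x², y³)`. -/
abbrev A : Type := R ⧸ IA

/-- `B = ℤ[x,y]/(x², y³ + x·y²)`. -/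
abbrev B : Type := R ⧸ IB

noncomputable def xA : A := Ideal.Quotient.mk IA (X 0)
noncomputable def yA : A := Ideal.Quotient.mk IA (X 1)
noncomputable def xB : B := Ideal.Quotient.mk IB (X 0)
noncomputable def yB : B := Ideal.Quotient.mk IB (X 1)

/-- The monic polynomial `Y³ + ε Y²` over `ℤ[ε]`, so that `B` is `ℤ[ε][Y] / (Y³ + ε Y²)`. -/
noncomputable def relPoly : Polynomial (DualNumber ℤ) :=
  Polynomial.X ^ 3 + Polynomial.C DualNumber.eps * Polynomial.X ^ 2

lemma relPoly_monic : relPoly.Monic := by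
  unfold relPoly; monicity!

lemma natDegree_relPoly : relPoly.natDegree = 3 := by
  unfold relPoly; compute_degree!

/-- The homomorphism `B → ℤ[ε][Y] / (Y³ + ε Y²)` sending `x̄` to `ε` and `ȳ` to `Y`. -/
noncomputable def toAdjoinRoot : B →+* AdjoinRoot relPoly :=
  Ideal.Quotient.lift IB
    (aeval ![AdjoinRoot.of relPoly DualNumber.eps, AdjoinRoot.root relPoly]).toRingHom (by
      have hle : IB ≤ RingHom.ker (aeval (R := ℤ)
          ![AdjoinRoot.of relPoly DualNumber.eps, AdjoinRoot.root relPoly]).toRingHom := by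
        refine Ideal.span_le.mpr ?_
        rintro p (rfl | rfl)
        · have h : AdjoinRoot.of relPoly DualNumber.eps ^ 2 = 0 := by
            rw [← map_pow, pow_two, DualNumber.eps_mul_eps, map_zero]
          simpa [RingHom.mem_ker] using h
        · rw [SetLike.mem_coe]
          have h : AdjoinRoot.mk relPoly (Polynomial.X ^ 3 +
              Polynomial.C DualNumber.eps * Polynomial.X ^ 2) = 0 := AdjoinRoot.mk_self
          simpa [RingHom.mem_ker] using h
      exact fun p hp => hle hp)

@[simp]
lemma toAdjoinRoot_xB : toAdjoinRoot xB = AdjoinRoot.of relPoly DualNumber.eps := by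
  simp [toAdjoinRoot, xB]

@[simp]
lemma toAdjoinRoot_yB : toAdjoinRoot yB = AdjoinRoot.root relPoly := by
  simp [toAdjoinRoot, yB]

/-- `1, Y, Y²` are linearly independent over `ℤ[ε]` in `ℤ[ε][Y] / (Y³ + ε Y²)`. -/
lemma coeffs_eq_zero_of_quadratic_root {p q r : DualNumber ℤ}
    (h : AdjoinRoot.of relPoly r * AdjoinRoot.root relPoly ^ 2
      + AdjoinRoot.of relPoly q * AdjoinRoot.root relPoly + AdjoinRoot.of relPoly p = 0) :
    p = 0 ∧ q = 0 ∧ r = 0 := by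
  set g : Polynomial (DualNumber ℤ) :=
    Polynomial.C r * Polynomial.X ^ 2 + Polynomial.C q * Polynomial.X + Polynomial.C p with hg
  have hdvd : relPoly ∣ g := AdjoinRoot.mk_eq_zero.mp (by simpa [hg] using h)
  have hdeg : g.degree < relPoly.degree := by
    rw [Polynomial.degree_eq_natDegree relPoly_monic.ne_zero, natDegree_relPoly]
    exact Polynomial.degree_quadratic_lt
  have hzero : g = 0 := by
    by_contra hne
    exact relPoly_monic.not_dvd_of_degree_lt hne hdeg hdvd
  refine ⟨?_, ?_, ?_⟩
  · simpa [hg] using congrArg (Polynomial.coeff · 0) hzero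
  · simpa [hg, Polynomial.coeff_X, Polynomial.coeff_C] using congrArg (Polynomial.coeff · 1) hzero
  · simpa [hg, Polynomial.coeff_X, Polynomial.coeff_C] using congrArg (Polynomial.coeff · 2) hzero

/-- The monomials `x̄, ȳ, x̄ȳ, ȳ², x̄ȳ²` of `B` are linearly independent over `ℤ`. -/
lemma coeffs_eq_zero {a b c d e : ℤ}
    (h : (a : B) * xB + b * yB + c * (xB * yB) + d * yB ^ 2 + e * (xB * yB ^ 2) = 0) :
    a = 0 ∧ b = 0 ∧ c = 0 ∧ d = 0 ∧ e = 0 := by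
  have h' := congrArg toAdjoinRoot h
  simp only [map_add, map_mul, map_pow, map_intCast, map_zero, toAdjoinRoot_xB,
    toAdjoinRoot_yB] at h'
  obtain ⟨hp, hq, hr⟩ := coeffs_eq_zero_of_quadratic_root
    (p := (a : DualNumber ℤ) * DualNumber.eps)
    (q := (b : DualNumber ℤ) + (c : DualNumber ℤ) * DualNumber.eps)
    (r := (d : DualNumber ℤ) + (e : DualNumber ℤ) * DualNumber.eps) (by
      simp only [map_add, map_mul, map_intCast]
      linear_combination h')
  have hfst := congrArg TrivSqZeroExt.fst hq
  have hsnd := congrArg TrivSqZeroExt.snd hq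
  have hfst' := congrArg TrivSqZeroExt.fst hr
  have hsnd' := congrArg TrivSqZeroExt.snd hr
  have hsnd₀ := congrArg TrivSqZeroExt.snd hp
  simp at hfst hsnd hfst' hsnd' hsnd₀
  exact ⟨hsnd₀, hfst, hsnd, hfst', hsnd'⟩

lemma xA_sq : xA ^ 2 = 0 := by
  rw [xA, ← map_pow, Ideal.Quotient.eq_zero_iff_mem]
  exact Ideal.subset_span (by simp)

lemma yA_cube : yA ^ 3 = 0 := by
  rw [yA, ← map_pow, Ideal.Quotient.eq_zero_iff_mem]
  exact Ideal.subset_span (by simp)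

lemma xB_sq : xB ^ 2 = 0 := by
  rw [xB, ← map_pow, Ideal.Quotient.eq_zero_iff_mem]
  exact Ideal.subset_span (by simp)

lemma yB_cube_add : yB ^ 3 + xB * yB ^ 2 = 0 := by
  rw [xB, yB, ← map_pow, ← map_pow, ← map_mul, ← map_add, Ideal.Quotient.eq_zero_iff_mem]
  exact Ideal.subset_span (by simp)

theorem no_ring_iso_preserving_degree_two :
    ¬ ∃ φ : A ≃+* B,
        Submodule.span ℤ ({φ xA, φ yA} : Set B) = Submodule.span ℤ ({xB, yB} : Set B) := by
  rintro ⟨φ, hφ⟩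
  have hx : φ xA ∈ Submodule.span ℤ ({xB, yB} : Set B) :=
    hφ ▸ Submodule.subset_span (by simp)
  have hy : φ yA ∈ Submodule.span ℤ ({xB, yB} : Set B) :=
    hφ ▸ Submodule.subset_span (by simp)
  have hyB : yB ∈ Submodule.span ℤ ({φ xA, φ yA} : Set B) :=
    hφ ▸ Submodule.subset_span (by simp)
  obtain ⟨a, b, hab⟩ := Submodule.mem_span_pair.mp hx
  obtain ⟨c, d, hcd⟩ := Submodule.mem_span_pair.mp hy
  obtain ⟨m, n, hmn⟩ := Submodule.mem_span_pair.mp hyB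
  simp only [zsmul_eq_mul] at hab hcd hmn
  have hsq : ((a : B) * xB + b * yB) ^ 2 = 0 := by rw [hab, ← map_pow, xA_sq, map_zero]
  have hcube : ((c : B) * xB + d * yB) ^ 3 = 0 := by rw [hcd, ← map_pow, yA_cube, map_zero]
  rw [← hab, ← hcd] at hmn
  have hb : b = 0 := by
    have h := coeffs_eq_zero (a := 0) (b := 0) (c := 2 * a * b) (d := b ^ 2) (e := 0) (by
      push_cast
      linear_combination hsq - (a : B) ^ 2 * xB_sq)
    exact pow_eq_zero_iff two_ne_zero |>.mp h.2.2.2.1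
  subst hb
  have hcd' : 3 * c * d ^ 2 - d ^ 3 = 0 := by
    have h := coeffs_eq_zero (a := 0) (b := 0) (c := 0) (d := 0) (e := 3 * c * d ^ 2 - d ^ 3) (by
      push_cast
      linear_combination hcube - ((c : B) ^ 3 * xB + 3 * c ^ 2 * d * yB) * xB_sq
        - (d : B) ^ 3 * yB_cube_add)
    exact h.2.2.2.2
  have hnd : n * d - 1 = 0 := by
    have h := coeffs_eq_zero (a := m * a + n * c) (b := n * d - 1) (c := 0) (d := 0) (e := 0) (by
      push_cast at hmn ⊢
      linear_combination hmn)
    exact h.2.1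
  have hd : d = 3 * c := by
    have hd0 : d ≠ 0 := by
      rintro rfl
      simp at hnd
    exact mul_left_cancel₀ (pow_ne_zero 2 hd0) (by linear_combination -hcd')
  subst hd
  have : 3 * (n * c) = 1 := by linear_combination hnd
  omega

end Stmt11
end

section
/- Let R = ℤ[x,y] be the polynomial ring over ℤ in two variables and B = R/(x², y³ + x·y²), and write x̄ and ȳ for the images of x and y in B. Then for every a ∈ ℤ and every d ∈ {1,−1}, the element (a·x̄ + d·ȳ)³ of B is nonzero. -/
namespace Stmt12

open MvPolynomial

/-- `ℤ[x,y]`. -/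
abbrev R : Type := MvPolynomial (Fin 2) ℤ

/-- The ideal `(x², y³ + x·y²)` of `ℤ[x,y]`. -/
noncomputable def IB : Ideal R := Ideal.span {(X 0 : R) ^ 2, (X 1 : R) ^ 3 + X 0 * (X 1 : R) ^ 2}

/-- `B = ℤ[x,y]/(x², y³ + x·y²)`. -/
abbrev B : Type := R ⧸ IB

noncomputable def xB : B := Ideal.Quotient.mk IB (X 0)
noncomputable def yB : B := Ideal.Quotient.mk IB (X 1)

/-- The exponent vector of `x ^ i * y ^ j`. -/
noncomputable def expVec (i j : ℕ) : Fin 2 →₀ ℕ := Finsupp.single 0 i + Finsupp.single 1 j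

lemma expVec_le_iff {i j k l : ℕ} : expVec i j ≤ expVec k l ↔ i ≤ k ∧ j ≤ l := by
  simp [expVec, Finsupp.le_def, Fin.forall_fin_two]

lemma expVec_inj {i j k l : ℕ} : expVec i j = expVec k l ↔ i = k ∧ j = l := by
  simp [expVec, Finsupp.ext_iff, Fin.forall_fin_two]

lemma X_pow_mul_X_pow (i j : ℕ) :
    (X 0 : R) ^ i * X 1 ^ j = monomial (expVec i j) 1 := by
  simp [expVec, X_pow_eq_monomial, monomial_mul]

/-- Members of `(x², y³ + x·y²)` have equal coefficients at `x·y²` and `y³`. -/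
lemma coeff_eq_coeff_of_mem_IB {p : R} (hp : p ∈ IB) :
    coeff (expVec 1 2) p = coeff (expVec 0 3) p := by
  obtain ⟨u, v, rfl⟩ := Ideal.mem_span_pair.mp hp
  have hx : (X 0 : R) ^ 2 = monomial (expVec 2 0) 1 := by simp [← X_pow_mul_X_pow]
  have hy : (X 1 : R) ^ 3 + X 0 * X 1 ^ 2 =
      monomial (expVec 0 3) 1 + monomial (expVec 1 2) 1 := by simp [← X_pow_mul_X_pow]
  simp [hx, hy, mul_add, coeff_mul_monomial', expVec_le_iff]

lemma linear_cube_eq (a d : ℤ) :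
    (a • (X 0 : R) + d • X 1) ^ 3 =
      a ^ 3 • monomial (expVec 3 0) 1 + (3 * a ^ 2 * d) • monomial (expVec 2 1) 1 +
        (3 * a * d ^ 2) • monomial (expVec 1 2) 1 + d ^ 3 • monomial (expVec 0 3) 1 := by
  simp only [← X_pow_mul_X_pow, zsmul_eq_mul]
  push_cast
  ring

theorem cube_ne_zero (a d : ℤ) (hd : d = 1 ∨ d = -1) :
    (a • xB + d • yB) ^ 3 ≠ 0 := by
  intro h
  have hmem : (a • (X 0 : R) + d • X 1) ^ 3 ∈ IB := by
    rw [← Ideal.Quotient.eq_zero_iff_mem]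
    simpa only [map_pow, map_add, map_zsmul, xB, yB] using h
  have hcoeff := coeff_eq_coeff_of_mem_IB hmem
  simp only [linear_cube_eq, coeff_add, coeff_smul, coeff_monomial, expVec_inj] at hcoeff
  norm_num at hcoeff
  rcases hd with rfl | rfl <;> omega

end Stmt12
end

section
/- Let R = ℤ[x,y] be the polynomial ring over ℤ in two variables and B = R/(x², y³ + x·y²), and write x̄ and ȳ for the images of x and y in B. If a, b ∈ ℤ satisfy (a·x̄ + b·ȳ)² = 0 in B, then b = 0. -/
namespace Stmt13

open MvPolynomial

/-- `ℤ[x,y]`. -/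
abbrev R : Type := MvPolynomial (Fin 2) ℤ

/-- The ideal `(x², y³ + x·y²)` of `ℤ[x,y]`. -/
noncomputable def IB : Ideal R := Ideal.span {(X 0 : R) ^ 2, (X 1 : R) ^ 3 + X 0 * (X 1 : R) ^ 2}

/-- `B = ℤ[x,y]/(x², y³ + x·y²)`. -/
abbrev B : Type := R ⧸ IB

noncomputable def xB : B := Ideal.Quotient.mk IB (X 0)
noncomputable def yB : B := Ideal.Quotient.mk IB (X 1)

/-- Setting `x = 0` sends every element of `(x², y³ + x·y²)` to a multiple of `y³`. -/
theorem X_pow_three_dvd_aeval_of_mem_IB {p : R} (hp : p ∈ IB) :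
    (Polynomial.X : Polynomial ℤ) ^ 3 ∣ aeval ![0, Polynomial.X] p := by
  have hle : IB ≤ (Ideal.span {(Polynomial.X : Polynomial ℤ) ^ 3}).comap
      (aeval ![0, Polynomial.X] : R →ₐ[ℤ] Polynomial ℤ) := by
    rw [IB, Ideal.span_le]
    rintro q (rfl | rfl) <;> simp
  exact Ideal.mem_span_singleton.mp (hle hp)

theorem sq_eq_zero_forces_b_zero (a b : ℤ) (h : (a • xB + b • yB) ^ 2 = 0) : b = 0 := by
  have hmem : (a • (X 0 : R) + b • (X 1 : R)) ^ 2 ∈ IB := by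
    rw [← Ideal.Quotient.eq_zero_iff_mem]
    simpa [xB, yB] using h
  have hdvd := X_pow_three_dvd_aeval_of_mem_IB hmem
  have hcoeff := Polynomial.X_pow_dvd_iff.mp hdvd 2 (by norm_num)
  simpa [mul_pow, Polynomial.coeff_mul_X_pow', Polynomial.coeff_zero_eq_eval_zero] using hcoeff

end Stmt13
end
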